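/- For all i, j ∈ {0,1,…,d} with i < j: E_i* A_j E_j* = E_i* A_j, E_j* A_j E_i* = A_j E_i*, and E_j* A_i E_j* = A_i E_j*. -/

import Mathlib

open Finset Matrix

/-- Vertex set of the wreath product `K_{n 0} ≀ K_{n 1} ≀ ⋯ ≀ K_{n (d-1)}`
(paper indices `n_1, …, n_d` correspond to `n 0, …, n (d-1)`). -/
abbrev Vx (d : ℕ) (n : ℕ → ℕ) : Type := (i : Fin d) → Fin (n i)

/-- `delta x y = 0` if `x = y`; otherwise `delta x y` is the largest (1-based)
index at which `x` and `y` differ. -/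
def delta {d : ℕ} {n : ℕ → ℕ} (x y : Vx d n) : ℕ :=
  (Finset.univ.filter fun i => x i ≠ y i).sup fun i => (i : ℕ) + 1

/-- The `i`-th adjacency matrix of the wreath product: `(A i) x y = 1` iff `delta x y = i`. -/
noncomputable def A (d : ℕ) (n : ℕ → ℕ) (i : ℕ) : Matrix (Vx d n) (Vx d n) ℂ :=
  Matrix.of fun x y => if delta x y = i then 1 else 0

/-- The valencies: `k 0 = 1` and, for `1 ≤ i`, `k i = n_1 ⋯ n_{i-1} (n_i - 1)`,
i.e. `k i = n 0 ⋯ n (i-2) * (n (i-1) - 1)`. -/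
def k (n : ℕ → ℕ) (i : ℕ) : ℕ :=
  if i = 0 then 1 else (∏ j ∈ Finset.range (i - 1), n j) * (n (i - 1) - 1)

/-- The dual idempotent `E_i*` with respect to the base point `x₀`: the diagonal
0-1 matrix with `(E_i*)_{yy} = 1` iff `delta x₀ y = i`. -/
noncomputable def Es {d : ℕ} {n : ℕ → ℕ} (x₀ : Vx d n) (i : ℕ) :
    Matrix (Vx d n) (Vx d n) ℂ :=
  Matrix.of fun y z => if y = z ∧ delta x₀ y = i then 1 else 0

/-- The all-ones matrix `J`. -/
noncomputable def Jm (d : ℕ) (n : ℕ → ℕ) : Matrix (Vx d n) (Vx d n) ℂ :=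
  Matrix.of fun _ _ => 1

/-- The matrices `G i j`. -/
noncomputable def G {d : ℕ} {n : ℕ → ℕ} (x₀ : Vx d n) (i j : ℕ) :
    Matrix (Vx d n) (Vx d n) ℂ :=
  if i < j then ((k n j : ℂ))⁻¹ • (Es x₀ i * A d n j * Es x₀ j)
  else if j < i then ((k n j : ℂ))⁻¹ • (Es x₀ i * A d n i * Es x₀ j)
  else ((k n i : ℂ))⁻¹ • (Es x₀ i * Jm d n * Es x₀ i)

/-- The span `U` of the matrices `G i j`, `i, j ∈ [d]`. -/
noncomputable def Uspan {d : ℕ} {n : ℕ → ℕ} (x₀ : Vx d n) :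
    Submodule ℂ (Matrix (Vx d n) (Vx d n) ℂ) :=
  Submodule.span ℂ (Set.range fun p : Fin (d + 1) × Fin (d + 1) => G x₀ p.1 p.2)

/-- The Terwilliger algebra of the wreath product with respect to `x₀`. -/
noncomputable def Ter {d : ℕ} {n : ℕ → ℕ} (x₀ : Vx d n) :
    Subalgebra ℂ (Matrix (Vx d n) (Vx d n) ℂ) :=
  Algebra.adjoin ℂ
    ((Set.range fun i : Fin (d + 1) => A d n i) ∪ (Set.range fun i : Fin (d + 1) => Es x₀ i))

/-- The matrices `F i h`, for `1 ≤ i ≤ d` and `0 ≤ h ≤ i - 1`. -/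
noncomputable def F {d : ℕ} {n : ℕ → ℕ} (x₀ : Vx d n) (i h : ℕ) :
    Matrix (Vx d n) (Vx d n) ℂ :=
  if h < i - 1 then
    (∑ j ∈ Finset.range (h + 1), (k n j : ℂ))⁻¹ •
        (∑ j ∈ Finset.range (h + 1), Es x₀ i * A d n j * Es x₀ i)
      - (∑ j ∈ Finset.range (h + 2), (k n j : ℂ))⁻¹ •
          (∑ j ∈ Finset.range (h + 2), Es x₀ i * A d n j * Es x₀ i)
  else
    (∑ j ∈ Finset.range i, (k n j : ℂ))⁻¹ •
        (∑ j ∈ Finset.range i, Es x₀ i * A d n j * Es x₀ i)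
      - G x₀ i i

/-!
Since `delta x y ≤ m` says that `x` and `y` agree in all coordinates of (0-based) index at least
`m`, `delta` is an ultrametric, and the two longest sides of every triangle are equal. In each
of the three identities the triangle formed by `x₀` and the row and column of a nonzero entry has
sides `i < j`, so the third side is `j` and the extra factor `E_j*` acts as the identity.
-/

section Ultrametric

variable {d : ℕ} {n : ℕ → ℕ}

theorem delta_le_iff {x y : Vx d n} {m : ℕ} :
    delta x y ≤ m ↔ ∀ i : Fin d, m ≤ i → x i = y i := by
  simp only [delta, Finset.sup_le_iff, Finset.mem_filter_univ, Nat.succ_le_iff]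
  exact forall_congr' fun i => by rw [← not_le, not_imp_not]

theorem delta_comm (x y : Vx d n) : delta x y = delta y x := by
  simp only [delta, ne_comm]

theorem delta_triangle_max (x y z : Vx d n) : delta x z ≤ max (delta x y) (delta y z) :=
  delta_le_iff.2 fun i hi =>
    (delta_le_iff.1 le_rfl i (le_of_max_le_left hi)).trans
      (delta_le_iff.1 le_rfl i (le_of_max_le_right hi))

theorem delta_eq_of_delta_lt {x y z : Vx d n} (h : delta x y < delta y z) :
    delta x z = delta y z := by
  have upper : delta x z ≤ max (delta x y) (delta y z) := delta_triangle_max x y z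
  have lower : delta y z ≤ max (delta x y) (delta x z) :=
    delta_comm x y ▸ delta_triangle_max y x z
  exact le_antisymm (upper.trans_eq (max_eq_right h.le))
    ((le_max_iff.1 lower).resolve_left h.not_ge)

end Ultrametric

section DualIdempotent

variable {d : ℕ} {n : ℕ → ℕ} (x₀ : Vx d n) (i : ℕ) (M : Matrix (Vx d n) (Vx d n) ℂ)

theorem Es_eq_diagonal :
    Es x₀ i = Matrix.diagonal fun y => if delta x₀ y = i then (1 : ℂ) else 0 := by
  ext y z
  simp only [Es, Matrix.of_apply, Matrix.diagonal_apply, ite_and]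

theorem Es_mul_apply (y z : Vx d n) :
    (Es x₀ i * M) y z = if delta x₀ y = i then M y z else 0 := by
  rw [Es_eq_diagonal, Matrix.diagonal_mul, ite_mul, one_mul, zero_mul]

theorem mul_Es_apply (y z : Vx d n) :
    (M * Es x₀ i) y z = if delta x₀ z = i then M y z else 0 := by
  rw [Es_eq_diagonal, Matrix.mul_diagonal, mul_ite, mul_one, mul_zero]

variable {x₀ i M}

theorem Es_mul_eq_self_iff : Es x₀ i * M = M ↔ ∀ y z, M y z ≠ 0 → delta x₀ y = i := by
  simp only [← Matrix.ext_iff, Es_mul_apply, ite_eq_left_iff, eq_comm (a := (0 : ℂ)),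
    not_imp_comm, ne_eq]

theorem mul_Es_eq_self_iff : M * Es x₀ i = M ↔ ∀ y z, M y z ≠ 0 → delta x₀ z = i := by
  simp only [← Matrix.ext_iff, mul_Es_apply, ite_eq_left_iff, eq_comm (a := (0 : ℂ)),
    not_imp_comm, ne_eq]

end DualIdempotent

section Adjacency

variable {d : ℕ} {n : ℕ → ℕ} {x₀ y z : Vx d n} {i j : ℕ}

theorem A_apply_ne_zero_iff : A d n i y z ≠ 0 ↔ delta y z = i := by
  simp only [A, Matrix.of_apply, ne_eq, ite_eq_right_iff, one_ne_zero, imp_false, not_not]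

theorem Es_mul_A_apply_ne_zero_iff :
    (Es x₀ i * A d n j) y z ≠ 0 ↔ delta x₀ y = i ∧ delta y z = j := by
  rw [Es_mul_apply, ite_ne_right_iff, A_apply_ne_zero_iff]

theorem A_mul_Es_apply_ne_zero_iff :
    (A d n j * Es x₀ i) y z ≠ 0 ↔ delta x₀ z = i ∧ delta y z = j := by
  rw [mul_Es_apply, ite_ne_right_iff, A_apply_ne_zero_iff]

theorem Es_mul_A_mul_Es_eq_Es_mul_A (hij : i < j) :
    Es x₀ i * A d n j * Es x₀ j = Es x₀ i * A d n j := by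
  refine mul_Es_eq_self_iff.2 fun y z hyz => ?_
  obtain ⟨rfl, rfl⟩ := Es_mul_A_apply_ne_zero_iff.1 hyz
  exact delta_eq_of_delta_lt hij

theorem Es_mul_A_mul_Es_eq_A_mul_Es (hij : i < j) :
    Es x₀ j * A d n j * Es x₀ i = A d n j * Es x₀ i := by
  rw [Matrix.mul_assoc]
  refine Es_mul_eq_self_iff.2 fun y z hyz => ?_
  obtain ⟨rfl, rfl⟩ := A_mul_Es_apply_ne_zero_iff.1 hyz
  rw [delta_comm y z] at hij ⊢
  exact delta_eq_of_delta_lt hij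

theorem Es_mul_A_mul_Es_self_eq_A_mul_Es (hij : i < j) :
    Es x₀ j * A d n i * Es x₀ j = A d n i * Es x₀ j := by
  rw [Matrix.mul_assoc]
  refine Es_mul_eq_self_iff.2 fun y z hyz => ?_
  obtain ⟨rfl, rfl⟩ := A_mul_Es_apply_ne_zero_iff.1 hyz
  rw [delta_comm x₀ z] at hij ⊢
  rw [delta_comm x₀ y]
  exact delta_eq_of_delta_lt hij

end Adjacency

/-- for `i < j ≤ d`: `E_i* A_j E_j* = E_i* A_j`, `E_j* A_j E_i* = A_j E_i*`,
and `E_j* A_i E_j* = A_i E_j*`. -/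
theorem stmt13 (d : ℕ) (hd : 1 ≤ d) (n : ℕ → ℕ) (hn : ∀ i < d, 2 ≤ n i)
    (x₀ : Vx d n) (i j : ℕ) (hij : i < j) (hj : j ≤ d) :
    Es x₀ i * A d n j * Es x₀ j = Es x₀ i * A d n j ∧
    Es x₀ j * A d n j * Es x₀ i = A d n j * Es x₀ i ∧
    Es x₀ j * A d n i * Es x₀ j = A d n i * Es x₀ j := by
  exact ⟨Es_mul_A_mul_Es_eq_Es_mul_A hij, Es_mul_A_mul_Es_eq_A_mul_Es hij,
    Es_mul_A_mul_Es_self_eq_A_mul_Es hij⟩
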